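/- Let G be a group with d(G) = n ≥ 2 and let H be a subgroup of G of finite index at most n + 2. Then, except for the single case where n = 2, H is normal in G and G/H is isomorphic to C_2^2 (in which case H = [G,G]G^2), every left coset of H and every right coset of H contains a primitive element of G. -/

import Mathlib

/-- A primitive element of a group `G` of finite rank: an element belonging to some
generating set of `G` of size exactly `d(G)`. -/
def IsPrimitive (G : Type*) [Group G] [Group.FG G] (g : G) : Prop :=
  ∃ S : Finset G, g ∈ S ∧ S.card = Group.rank G ∧ Subgroup.closure (S : Set G) = ⊤

/-- The exceptional case: `n = 2`, `H` is normal in `G` and `G ⧸ H ≅ C₂²` (expressed via a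
surjective homomorphism onto `C₂²` with kernel `H`). -/
def ExceptionalCase {G : Type*} [Group G] (n : ℕ) (H : Subgroup G) : Prop :=
  n = 2 ∧ H.Normal ∧ ∃ φ : G →* Multiplicative (Fin 2 → ZMod 2),
    Function.Surjective φ ∧ φ.ker = H

section helpers

open scoped Pointwise

def GenTuple {G : Type*} [Group G] {n : ℕ} (f : Fin n → G) : Prop :=
  Subgroup.closure (Set.range f) = ⊤

lemma GenTuple.prim {G : Type*} [Group G] [Group.FG G] {n : ℕ} (hr : Group.rank G = n)
    {f : Fin n → G} (hf : GenTuple f) (i : Fin n) : IsPrimitive G (f i) := by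
  classical
  have hc : Subgroup.closure ((Finset.univ.image f : Finset G) : Set G) = ⊤ := by
    simpa [GenTuple] using hf
  refine ⟨Finset.univ.image f, by simp, ?_, hc⟩
  have h1 := Group.rank_le hc
  have h2 : (Finset.univ.image f).card ≤ n := by
    simpa using (Finset.card_image_le (s := Finset.univ) (f := f))
  omega

lemma IsPrimitive.exists_tuple {G : Type*} [Group G] [Group.FG G] {n : ℕ}
    (hr : Group.rank G = n) {x : G} (hx : IsPrimitive G x) :
    ∃ f : Fin n → G, GenTuple f ∧ ∃ i, f i = x := by
  obtain ⟨S, hxS, hS, hc⟩ := hx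
  rw [hr] at hS
  subst hS
  let e := S.equivFin
  refine ⟨fun i => (e.symm i : G), ?_, e ⟨x, hxS⟩, by simp⟩
  have : Set.range (fun i => (e.symm i : G)) = S := by
    ext y
    constructor
    · rintro ⟨i, rfl⟩; exact (e.symm i).2
    · intro hy; exact ⟨e ⟨y, hy⟩, by simp⟩
  rw [GenTuple, this, hc]

lemma exists_genTuple (G : Type*) [Group G] [Group.FG G] {n : ℕ}
    (hr : Group.rank G = n) : ∃ f : Fin n → G, GenTuple f := by
  obtain ⟨S, hS, hc⟩ := Group.rank_spec G
  rw [hr] at hS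
  subst hS
  let e := S.equivFin
  refine ⟨fun i => (e.symm i : G), ?_⟩
  have : Set.range (fun i => (e.symm i : G)) = S := by
    ext y
    constructor
    · rintro ⟨i, rfl⟩; exact (e.symm i).2
    · intro hy; exact ⟨e ⟨y, hy⟩, by simp⟩
  rw [GenTuple, this, hc]

lemma GenTuple.update {G : Type*} [Group G] {n : ℕ}
    {f : Fin n → G} (hf : GenTuple f) (i : Fin n) {w v z : G}
    (hw : w ∈ Subgroup.closure (f '' {i}ᶜ)) (hv : v ∈ Subgroup.closure (f '' {i}ᶜ))
    (hz : z = f i ∨ z = (f i)⁻¹) :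
    GenTuple (Function.update f i (w * z * v)) := by
  set g := Function.update f i (w * z * v) with hg
  have hle : Subgroup.closure (f '' {i}ᶜ) ≤ Subgroup.closure (Set.range g) := by
    rw [Subgroup.closure_le]
    rintro _ ⟨j, hj, rfl⟩
    apply Subgroup.subset_closure
    refine ⟨j, ?_⟩
    have : j ≠ i := hj
    simp [hg, this]
  have hi : w * z * v ∈ Subgroup.closure (Set.range g) :=
    Subgroup.subset_closure ⟨i, by simp [hg]⟩
  have hz' : z ∈ Subgroup.closure (Set.range g) := by
    have : z = w⁻¹ * (w * z * v) * v⁻¹ := by group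
    rw [this]
    exact mul_mem (mul_mem (inv_mem (hle hw)) hi) (inv_mem (hle hv))
  have hfi : f i ∈ Subgroup.closure (Set.range g) := by
    rcases hz with h | h
    · rwa [← h]
    · rw [← inv_inv (f i), ← h]; exact inv_mem hz'
  rw [GenTuple, eq_top_iff, ← hf, Subgroup.closure_le]
  rintro _ ⟨j, rfl⟩
  by_cases hj : j = i
  · subst hj; exact hfi
  · exact hle (Subgroup.subset_closure ⟨j, hj, rfl⟩)

lemma GenTuple.prim_mul {G : Type*} [Group G] [Group.FG G] {n : ℕ} (hr : Group.rank G = n)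
    {f : Fin n → G} (hf : GenTuple f) (i : Fin n) {w v z : G}
    (hw : w ∈ Subgroup.closure (f '' {i}ᶜ)) (hv : v ∈ Subgroup.closure (f '' {i}ᶜ))
    (hz : z = f i ∨ z = (f i)⁻¹) : IsPrimitive G (w * z * v) := by
  have := (hf.update i hw hv hz).prim hr i
  simpa using this

lemma IsPrimitive.inv' {G : Type*} [Group G] [Group.FG G] {x : G} (hx : IsPrimitive G x) :
    IsPrimitive G x⁻¹ := by
  obtain ⟨f, hf, i, rfl⟩ := hx.exists_tuple rfl
  simpa using hf.prim_mul rfl i (one_mem _) (one_mem _) (Or.inr rfl)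

lemma IsPrimitive.conj' {G : Type*} [Group G] [Group.FG G] {x : G} (hx : IsPrimitive G x)
    (g : G) : IsPrimitive G (g * x * g⁻¹) := by
  obtain ⟨f, hf, i, rfl⟩ := hx.exists_tuple rfl
  have hc : GenTuple (fun j => g * f j * g⁻¹) := by
    have : Set.range (fun j => g * f j * g⁻¹) = (MulAut.conj g).toMonoidHom '' Set.range f := by
      rw [← Set.range_comp]; rfl
    rw [GenTuple, this, ← MonoidHom.map_closure, hf, ← MonoidHom.range_eq_map]
    exact MonoidHom.range_eq_top.2 (MulAut.conj g).surjective
  exact hc.prim rfl i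

/-- A transitive action: a nontrivially proper invariant set is moved by some generator. -/
lemma GenTuple.exists_moves {G : Type*} [Group G] {n : ℕ} {f : Fin n → G} (hf : GenTuple f)
    {Ω : Type*} [MulAction G Ω] [Finite Ω] (htr : ∀ a b : Ω, ∃ g : G, g • a = b)
    (S : Set Ω) {o b : Ω} (ho : o ∈ S) (hb : b ∉ S) : ∃ i, ∃ p ∈ S, f i • p ∉ S := by
  by_contra! hcon
  have hst : ∀ g : G, ∀ p ∈ S, g • p ∈ S := by
    have key : (⊤ : Subgroup G) ≤ MulAction.stabilizer G S := by
      rw [← hf, Subgroup.closure_le]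
      rintro _ ⟨i, rfl⟩
      simp only [SetLike.mem_coe]
      rw [MulAction.mem_stabilizer_set_iff_smul_set_subset (Set.toFinite S)]
      rintro _ ⟨p, hp, rfl⟩
      exact hcon i p hp
    intro g p hp
    have h1 : g • S = S := key (Subgroup.mem_top g)
    rw [← h1]
    exact Set.smul_mem_smul_set hp
  obtain ⟨g, rfl⟩ := htr o b
  exact hb (hst g o ho)

/-- size of the orbit of the elements outside the stabilizer -/
lemma card_orbit_aux {G : Type*} [Group G] {n : ℕ} {f : Fin n → G}
    {Ω : Type*} [MulAction G Ω] [Finite Ω] {o : Ω} (T : Finset (Fin n))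
    (h1 : ∀ i ∈ T, f i • o ≠ o)
    (h2 : ∀ i ∈ T, ∀ j ∈ T, i ≠ j → f i • o ≠ f j • o) :
    T.card + 1 ≤ (MulAction.orbit (Subgroup.closure (f '' (T : Set (Fin n)))) o).ncard := by
  classical
  have hsub : ((insert o (T.image (fun i => f i • o)) : Finset Ω) : Set Ω) ⊆
      MulAction.orbit (Subgroup.closure (f '' (T : Set (Fin n)))) o := by
    intro q hq
    simp only [Finset.coe_insert, Finset.coe_image, Set.mem_insert_iff, Set.mem_image] at hq
    rcases hq with rfl | ⟨i, hi, rfl⟩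
    · exact MulAction.mem_orbit_self _
    · exact ⟨⟨f i, Subgroup.subset_closure ⟨i, hi, rfl⟩⟩, rfl⟩
  have := Set.ncard_le_ncard hsub (Set.toFinite _)
  rw [Set.ncard_coe_finset, Finset.card_insert_of_notMem, Finset.card_image_of_injOn] at this
  · exact this
  · intro i hi j hj hij
    by_contra hne
    exact h2 i hi j hj hne hij
  · simp only [Finset.mem_image, not_exists, not_and]
    exact h1

/-- If no primitive element fixes `o`, the action has at least `2 n` points. -/
lemma two_mul_orbit {G : Type*} [Group G] [Group.FG G] {n : ℕ} (hr : Group.rank G = n)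
    {f : Fin n → G} (hf : GenTuple f)
    {Ω : Type*} [MulAction G Ω] [Finite Ω] {o : Ω}
    (hno : ∀ x : G, IsPrimitive G x → x • o ≠ o) (i : Fin n) :
    n ≤ (MulAction.orbit (Subgroup.closure (f '' {i}ᶜ)) o).ncard ∧
    2 * (MulAction.orbit (Subgroup.closure (f '' {i}ᶜ)) o).ncard ≤ Nat.card Ω := by
  classical
  constructor
  · have := card_orbit_aux (f := f) (o := o) ({i}ᶜ : Finset (Fin n))
      (fun j _ => hno _ (hf.prim hr j)) (by
        intro j _ k _ hjk h
        have hj : f j ∈ Subgroup.closure (f '' {k}ᶜ) := Subgroup.subset_closure ⟨j, hjk, rfl⟩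
        have := hf.prim_mul hr k (inv_mem hj) (one_mem _) (Or.inl rfl)
        apply hno _ this
        rw [mul_one, mul_smul, ← h, inv_smul_smul])
    rw [Finset.card_compl, Finset.card_singleton, Fintype.card_fin] at this
    have hcoe : ((({i}ᶜ : Finset (Fin n))) : Set (Fin n)) = {i}ᶜ := by simp
    rw [hcoe] at this
    omega
  · set O := MulAction.orbit (Subgroup.closure (f '' {i}ᶜ)) o with hO
    have hdis : Disjoint O ((fun p => f i • p) '' O) := by
      rw [Set.disjoint_left]
      rintro _ ⟨k, rfl⟩ ⟨_, ⟨k', rfl⟩, h⟩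
      have := hf.prim_mul hr i (inv_mem k.2) k'.2 (Or.inl rfl)
      apply hno _ this
      simp only [Subgroup.smul_def] at h
      rw [mul_smul, mul_smul, h, inv_smul_smul]
    have h1 := Set.ncard_union_eq hdis (Set.toFinite _) (Set.toFinite _)
    rw [Set.ncard_image_of_injective _ (MulAction.injective (f i))] at h1
    have h2 := Set.ncard_le_card (O ∪ (fun p => f i • p) '' O)
    omega

lemma final_step {G : Type*} [Group G] [Group.FG G] {n : ℕ} (hr : Group.rank G = n)
    {f : Fin n → G} (hf : GenTuple f)
    {Ω : Type*} [MulAction G Ω] [Finite Ω] (htr : ∀ a b : Ω, ∃ g : G, g • a = b)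
    {o : Ω} (i : Fin n) (hi : f i • o = o)
    (hc : Nat.card Ω ≤ (MulAction.orbit (Subgroup.closure (f '' {i}ᶜ)) o).ncard + 2) (b : Ω) :
    ∃ x : G, IsPrimitive G x ∧ x • o = b := by
  by_contra! hb
  set W := Subgroup.closure (f '' {i}ᶜ) with hW
  set O := MulAction.orbit W o with hO
  have hWb : ∀ w ∈ W, ∀ v ∈ W, w • f i • v • o ≠ b := by
    intro w hw v hv h
    refine hb _ (hf.prim_mul hr i hw hv (Or.inl rfl)) ?_
    rw [mul_smul, mul_smul, h]
  have hWb' : ∀ w ∈ W, ∀ v ∈ W, w • (f i)⁻¹ • v • o ≠ b := by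
    intro w hw v hv h
    refine hb _ (hf.prim_mul hr i hw hv (Or.inr rfl)) ?_
    rw [mul_smul, mul_smul, h]
  have hbO : b ∉ O := by
    rintro ⟨k, hk⟩
    apply hWb k k.2 1 (one_mem _)
    rw [one_smul, hi]; exact hk
  have hoO : o ∈ O := MulAction.mem_orbit_self _
  obtain ⟨j, p, ⟨v, rfl⟩, hp⟩ := hf.exists_moves htr O hoO hbO
  have hji : j = i := by
    by_contra hji
    apply hp
    exact ⟨⟨f j, Subgroup.subset_closure ⟨j, hji, rfl⟩⟩ * v, by simp [mul_smul, Subgroup.smul_def]⟩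
  subst hji
  have hv : (fun m : W => m • o) v = (v : G) • o := rfl
  rw [hv] at hp
  set a := f j • (v : G) • o with ha
  have hab : a ≠ b := by
    have := hWb 1 (one_mem _) v v.2
    rwa [one_smul] at this
  have hall : ∀ q : Ω, q ∈ O ∨ q = a ∨ q = b := by
    intro q
    by_contra! hq
    have h1 : (insert q (insert a (insert b O))).ncard = O.ncard + 3 := by
      rw [Set.ncard_insert_of_notMem (by simp [hq]), Set.ncard_insert_of_notMem (by simp [hp, hab]),
        Set.ncard_insert_of_notMem hbO]
    have h2 := Set.ncard_le_card (insert q (insert a (insert b O)))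
    omega
  -- b is fixed by everything
  have hfix : ∀ k, f k • b = b := by
    intro k
    by_cases hk : k = j
    · subst hk
      rcases hall (f k • b) with ⟨w, hw⟩ | h | h
      · exfalso
        apply hWb' 1 (one_mem _) w w.2
        rw [one_smul, inv_smul_eq_iff]
        exact hw
      · exfalso
        have h' := MulAction.injective (f k) h
        exact hbO (h' ▸ ⟨v, rfl⟩)
      · exact h
    · have hkW : f k ∈ W := Subgroup.subset_closure ⟨k, hk, rfl⟩
      rcases hall (f k • b) with ⟨w, hw⟩ | h | h
      · exfalso
        apply hWb ((f k)⁻¹ * w) (mul_mem (inv_mem hkW) w.2) 1 (one_mem _)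
        rw [one_smul, hi, mul_smul, inv_smul_eq_iff]
        exact hw
      · exfalso
        apply hWb (f k)⁻¹ (inv_mem hkW) v v.2
        rw [← ha, ← h, inv_smul_smul]
      · exact h
  obtain ⟨k, p, hpb, hk⟩ := hf.exists_moves htr {b} (o := b) (b := o) rfl
    (by rintro rfl; exact hbO hoO)
  rw [Set.mem_singleton_iff] at hpb
  subst hpb
  exact hk (hfix k)

lemma main_dichotomy {G : Type*} [Group G] [Group.FG G] {n : ℕ} (hn : 2 ≤ n)
    (hr : Group.rank G = n)
    {Ω : Type*} [MulAction G Ω] [Finite Ω] (htr : ∀ a b : Ω, ∃ g : G, g • a = b)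
    (hc : Nat.card Ω ≤ n + 2) (o : Ω) :
    (∀ b, ∃ x : G, IsPrimitive G x ∧ x • o = b) ∨
    ((∀ x : G, IsPrimitive G x → x • o ≠ o) ∧ n = 2 ∧ Nat.card Ω = 4) := by
  classical
  by_cases hno : ∀ x : G, IsPrimitive G x → x • o ≠ o
  · right
    obtain ⟨f, hf⟩ := exists_genTuple G hr
    obtain ⟨h1, h2⟩ := two_mul_orbit hr hf hno ⟨0, by omega⟩
    exact ⟨hno, by omega, by omega⟩
  left
  push Not at hno
  obtain ⟨x, hx, hxo⟩ := hno
  -- number of coordinates moving `o`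
  let Y : (Fin n → G) → Finset (Fin n) := fun f => Finset.univ.filter (fun i => f i • o ≠ o)
  have hex : ∃ m, ∃ f : Fin n → G, GenTuple f ∧ (Y f).card = m := by
    obtain ⟨f, hf⟩ := exists_genTuple G hr
    exact ⟨_, f, hf, rfl⟩
  obtain ⟨f, hf, hfm⟩ := Nat.find_spec hex
  have hmin : ∀ g : Fin n → G, GenTuple g → (Y f).card ≤ (Y g).card := by
    intro g hg
    rw [hfm]
    exact Nat.find_min' hex ⟨g, hg, rfl⟩
  have hYlt : Y f ≠ Finset.univ := by
    obtain ⟨g, hg, i, hgi⟩ := hx.exists_tuple hr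
    have h1 := hmin g hg
    intro h
    rw [h] at h1
    have h2 : Y g = Finset.univ := by
      apply Finset.eq_univ_of_card
      have := Finset.card_le_univ (Y g)
      simp at h1 this ⊢
      omega
    have h3 : i ∈ Y g := h2 ▸ Finset.mem_univ i
    simp only [Y, Finset.mem_filter] at h3
    exact h3.2 (hgi ▸ hxo)
  have hYgood : (Y f).card + 1 ≤
      (MulAction.orbit (Subgroup.closure (f '' (Y f : Set (Fin n)))) o).ncard := by
    apply card_orbit_aux
    · intro i hi
      exact (Finset.mem_filter.1 hi).2
    · intro i hi j hj hij h
      have hiW : f i ∈ Subgroup.closure (f '' {j}ᶜ) := Subgroup.subset_closure ⟨i, hij, rfl⟩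
      have hg := hf.update j (inv_mem hiW) (one_mem _) (Or.inl rfl)
      have h1 := hmin _ hg
      have hss : Y (Function.update f j ((f i)⁻¹ * f j * 1)) ⊂ Y f := by
        rw [Finset.ssubset_iff_of_subset]
        · refine ⟨j, hj, ?_⟩
          simp only [Y, Finset.mem_filter, Function.update_self, not_and, not_not]
          intro _
          rw [mul_one, mul_smul, ← h, inv_smul_smul]
        · intro k hk
          by_cases hkj : k = j
          · subst hkj; exact hj
          · simpa [Y, hkj] using hk
      have := Finset.card_lt_card hss
      omega
  -- maximal good proper set
  let good : Finset (Finset (Fin n)) := Finset.univ.filter (fun T => Y f ⊆ T ∧ T ≠ Finset.univ ∧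
    T.card + 1 ≤ (MulAction.orbit (Subgroup.closure (f '' (T : Set (Fin n)))) o).ncard)
  have hgne : good.Nonempty := ⟨Y f, by
    simp only [good, Finset.mem_filter]
    exact ⟨Finset.mem_univ _, subset_rfl, hYlt, hYgood⟩⟩
  obtain ⟨T, hT, hTmax⟩ := Finset.exists_max_image good Finset.card hgne
  simp only [good, Finset.mem_filter, Finset.mem_univ, true_and] at hT hTmax
  obtain ⟨hYT, hTu, hTc⟩ := hT
  set O := MulAction.orbit (Subgroup.closure (f '' (T : Set (Fin n)))) o with hO
  have hfixo : ∀ j ∉ T, f j • o = o := by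
    intro j hj
    by_contra h
    exact hj (hYT (by simp [Y, h]))
  have hmono : ∀ T' : Set (Fin n), (T : Set (Fin n)) ⊆ T' →
      O ⊆ MulAction.orbit (Subgroup.closure (f '' T')) o := by
    rintro T' hT' _ ⟨k, rfl⟩
    exact ⟨⟨k, Subgroup.closure_mono (Set.image_mono hT') k.2⟩, rfl⟩
  have hncle : ∀ T' : Set (Fin n), (T : Set (Fin n)) ⊆ T' →
      O.ncard ≤ (MulAction.orbit (Subgroup.closure (f '' T')) o).ncard :=
    fun T' h => Set.ncard_le_ncard (hmono T' h) (Set.toFinite _)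
  by_cases hOu : O = Set.univ
  · obtain ⟨j, hj⟩ : ∃ j, j ∉ T := by
      by_contra! h
      exact hTu (Finset.eq_univ_iff_forall.2 h)
    have hsub : (T : Set (Fin n)) ⊆ {j}ᶜ := by
      intro k hk hkj
      rw [Set.mem_singleton_iff] at hkj
      subst hkj
      exact hj hk
    have h1 := hncle _ hsub
    rw [hOu, Set.ncard_univ] at h1
    exact final_step hr hf htr j (hfixo j hj) (by omega)
  · obtain ⟨b, hb⟩ := (Set.ne_univ_iff_exists_notMem O).1 hOu
    obtain ⟨j, p, hpO, hp⟩ := hf.exists_moves htr O (MulAction.mem_orbit_self o) hb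
    obtain ⟨v, rfl⟩ := hpO
    have hj : j ∉ T := by
      intro hj
      apply hp
      exact ⟨⟨f j, Subgroup.subset_closure ⟨j, hj, rfl⟩⟩ * v,
        by simp [mul_smul, Subgroup.smul_def]⟩
    have hins : (T : Set (Fin n)) ⊆ (insert j T : Finset (Fin n)) := by
      intro k hk; simp at hk ⊢; exact Or.inr hk
    have hbig : O.ncard + 1 ≤ (MulAction.orbit (Subgroup.closure
        (f '' ((insert j T : Finset (Fin n)) : Set (Fin n)))) o).ncard := by
      apply Set.ncard_lt_ncard _ (Set.toFinite _)
      refine (Set.ssubset_iff_of_subset (hmono _ hins)).2 ⟨_, ?_, hp⟩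
      refine ⟨⟨f j, Subgroup.subset_closure ⟨j, by simp, rfl⟩⟩ *
        ⟨v, Subgroup.closure_mono (Set.image_mono hins) v.2⟩, ?_⟩
      simp [mul_smul, Subgroup.smul_def]
    have hcard := Finset.card_insert_of_notMem hj
    have huniv : insert j T = Finset.univ := by
      by_contra hne
      have := hTmax (insert j T) ⟨hYT.trans (Finset.subset_insert _ _), hne, by omega⟩
      omega
    rw [huniv, Finset.card_univ, Fintype.card_fin] at hcard
    have hsub : (T : Set (Fin n)) ⊆ {j}ᶜ := by
      intro k hk hkj
      rw [Set.mem_singleton_iff] at hkj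
      subst hkj
      exact hj hk
    have h1 := hncle _ hsub
    exact final_step hr hf htr j (hfixo j hj) (by omega)

lemma prim_sq {G : Type*} [Group G] [Group.FG G]
    (hr : Group.rank G = 2)
    {Ω : Type*} [MulAction G Ω] [Finite Ω]
    (hc : Nat.card Ω = 4) (o : Ω) (hno : ∀ x : G, IsPrimitive G x → x • o ≠ o)
    (y : G) (hy : IsPrimitive G y) : (y * y) • o = o := by
  obtain ⟨f, hf, i, rfl⟩ := hy.exists_tuple hr
  obtain ⟨j, hj⟩ : ∃ j : Fin 2, i ≠ j := exists_ne i |>.imp fun _ h => h.symm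
  obtain ⟨h1, h2⟩ := two_mul_orbit hr hf hno j
  set O := MulAction.orbit (Subgroup.closure (f '' {j}ᶜ)) o
  have hiW : f i ∈ Subgroup.closure (f '' {j}ᶜ) := Subgroup.subset_closure ⟨i, hj, rfl⟩
  by_contra hne
  have hp := hno _ hy
  have hne2 : (f i * f i) • o ≠ f i • o := by
    intro h
    rw [mul_smul] at h
    exact hp (MulAction.injective (f i) h)
  have hsub : ({(f i * f i) • o, f i • o, o} : Set Ω) ⊆ O := by
    rintro q (rfl | rfl | rfl)
    · exact ⟨⟨_, mul_mem hiW hiW⟩, rfl⟩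
    · exact ⟨⟨_, hiW⟩, rfl⟩
    · exact MulAction.mem_orbit_self _
  have h3 := Set.ncard_le_ncard hsub (Set.toFinite _)
  have h4 : ({(f i * f i) • o, f i • o, o} : Set Ω).ncard = 3 := by
    rw [Set.ncard_eq_three]
    exact ⟨_, _, _, hne2, hne, hp, rfl⟩
  omega

lemma klein_elems {Q : Type*} [Group Q] (x y : Q) (hx : x * x = 1) (hy : y * y = 1)
    (hxy : (x * y) * (x * y) = 1) (hgen : Subgroup.closure {x, y} = ⊤) :
    ∀ q : Q, q = 1 ∨ q = x ∨ q = y ∨ q = x * y := by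
  have hcomm : y * x = x * y := by
    have e1 : x⁻¹ = x := inv_eq_of_mul_eq_one_left hx
    have e2 : y⁻¹ = y := inv_eq_of_mul_eq_one_left hy
    have e3 : (x * y)⁻¹ = x * y := inv_eq_of_mul_eq_one_left hxy
    rw [mul_inv_rev, e1, e2] at e3
    exact e3
  have hx' : ∀ z, x * (x * z) = z := fun z => by rw [← mul_assoc, hx, one_mul]
  have hy' : ∀ z, y * (y * z) = z := fun z => by rw [← mul_assoc, hy, one_mul]
  have hc' : ∀ z, y * (x * z) = x * (y * z) := fun z => by rw [← mul_assoc, hcomm, mul_assoc]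
  have e1 : x⁻¹ = x := inv_eq_of_mul_eq_one_left hx
  have e2 : y⁻¹ = y := inv_eq_of_mul_eq_one_left hy
  intro q
  have hq : q ∈ Subgroup.closure {x, y} := hgen ▸ Subgroup.mem_top q
  induction hq using Subgroup.closure_induction with
  | mem z hz => rcases hz with rfl | rfl <;> simp
  | one => simp
  | mul a b _ _ ha hb =>
    rcases ha with rfl | rfl | rfl | rfl <;> rcases hb with rfl | rfl | rfl | rfl <;>
      simp [mul_assoc, hx, hy, hx', hy', hcomm, hc']
  | inv a _ ha =>
    rcases ha with rfl | rfl | rfl | rfl <;> simp [e1, e2, hcomm]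

lemma klein_sq {Q : Type*} [Group Q] (x y : Q) (hx : x * x = 1) (hy : y * y = 1)
    (hxy : (x * y) * (x * y) = 1) (hgen : Subgroup.closure {x, y} = ⊤) (q : Q) : q * q = 1 := by
  rcases klein_elems x y hx hy hxy hgen q with rfl | rfl | rfl | rfl
  · simp
  · exact hx
  · exact hy
  · exact hxy

lemma klein_card {Q : Type*} [Group Q] (x y : Q) (hx : x * x = 1) (hy : y * y = 1)
    (hxy : (x * y) * (x * y) = 1) (hgen : Subgroup.closure {x, y} = ⊤) :
    Finite Q ∧ Nat.card Q ≤ 4 := by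
  classical
  have h : (Set.univ : Set Q) ⊆ (({1, x, y, x * y} : Finset Q) : Set Q) := by
    intro q _
    simpa using klein_elems x y hx hy hxy hgen q
  have hfin : Finite Q := Set.finite_univ_iff.1 ((Finset.finite_toSet _).subset h)
  refine ⟨hfin, ?_⟩
  have := Set.ncard_le_ncard h (Finset.finite_toSet _)
  rw [Set.ncard_univ, Set.ncard_coe_finset] at this
  exact this.trans Finset.card_le_four

lemma quot_gen {G : Type*} [Group G] {f : Fin 2 → G} (hf : GenTuple f)
    (N : Subgroup G) [N.Normal] :
    Subgroup.closure {(f 0 : G ⧸ N), (f 1 : G ⧸ N)} = ⊤ := by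
  have : ({(f 0 : G ⧸ N), (f 1 : G ⧸ N)} : Set (G ⧸ N)) =
      (QuotientGroup.mk' N) '' Set.range f := by
    rw [← Set.range_comp]
    ext q
    simp [Fin.exists_fin_two, eq_comm]
  rw [this, ← MonoidHom.map_closure, hf, ← MonoidHom.range_eq_map]
  exact MonoidHom.range_eq_top.2 (QuotientGroup.mk'_surjective N)

instance klein_model : IsKleinFour (Multiplicative (Fin 2 → ZMod 2)) where
  card_four := by simp
  exponent_two := by
    apply Nat.Prime.eq_one_or_self_of_dvd Nat.prime_two _ ?_ |>.resolve_left
    · intro h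
      rw [Monoid.exp_eq_one_iff] at h
      have h1 := Nat.card_eq_one_iff_unique.2
        ⟨h, ⟨(1 : Multiplicative (Fin 2 → ZMod 2))⟩⟩
      simp at h1
    · apply Monoid.exponent_dvd_of_forall_pow_eq_one
      intro g
      rw [pow_two]
      change Multiplicative.ofAdd (g.toAdd + g.toAdd) = Multiplicative.ofAdd 0
      congr 1
      funext i
      exact CharTwo.add_self_eq_zero _

lemma exceptional_of_no_prim {G : Type*} [Group G] [Group.FG G]
    (hr : Group.rank G = 2) (H : Subgroup G) (hidx : H.index = 4)
    (hno : ∀ x : G, IsPrimitive G x → x • ((1 : G) : G ⧸ H) ≠ ((1 : G) : G ⧸ H)) :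
    ExceptionalCase 2 H := by
  have hfin : Finite (G ⧸ H) := Nat.finite_of_card_ne_zero (by
    change H.index ≠ 0
    omega)
  have hsq : ∀ y : G, IsPrimitive G y → y * y ∈ H.normalCore := by
    intro y hy b
    have h := prim_sq hr (Ω := G ⧸ H) hidx _ hno _ (hy.conj' b)
    have h' : (((b * y * b⁻¹ * (b * y * b⁻¹)) : G) : G ⧸ H) = ((1 : G) : G ⧸ H) := by
      rw [← h, MulAction.Quotient.smul_coe, smul_eq_mul, mul_one]
    rw [eq_comm, QuotientGroup.eq] at h'
    have e : b * (y * y) * b⁻¹ = 1⁻¹ * (b * y * b⁻¹ * (b * y * b⁻¹)) := by group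
    rw [e]
    exact h'
  obtain ⟨f, hf⟩ := exists_genTuple G hr
  have hxy : IsPrimitive G (f 0 * f 1) := by
    have h0 : f 0 ∈ Subgroup.closure (f '' {1}ᶜ) :=
      Subgroup.subset_closure ⟨0, by simp, rfl⟩
    simpa using hf.prim_mul hr 1 h0 (one_mem _) (Or.inl rfl)
  set N := H.normalCore with hN
  have hm : ∀ y : G, IsPrimitive G y → (y : G ⧸ N) * (y : G ⧸ N) = 1 := by
    intro y hy
    rw [← QuotientGroup.mk_mul, QuotientGroup.eq_one_iff]
    exact hsq y hy
  have k1 := hm _ (hf.prim hr 0)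
  have k2 := hm _ (hf.prim hr 1)
  have k3 := hm _ hxy
  rw [QuotientGroup.mk_mul] at k3
  obtain ⟨hQf, hQc⟩ := klein_card _ _ k1 k2 k3 (quot_gen hf N)
  have hNH : N ≤ H := Subgroup.normalCore_le H
  have hNi : N.index ≤ 4 := hQc
  have hNH' : N = H := by
    apply le_antisymm hNH
    rw [← Subgroup.relIndex_eq_one]
    have h1 := Subgroup.relIndex_mul_index hNH
    have h2 : N.index ≠ 0 := (Nat.card_pos (α := G ⧸ N)).ne'
    rw [hidx] at h1
    omega
  have hnor : H.Normal := hNH' ▸ (inferInstance : N.Normal)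
  refine ⟨rfl, hnor, ?_⟩
  have hexp : ∀ q : G ⧸ H, q * q = 1 := by
    have h0 : ∀ g : G, g * g ∈ N := by
      intro g
      rw [← QuotientGroup.eq_one_iff, QuotientGroup.mk_mul]
      exact klein_sq _ _ k1 k2 k3 (quot_gen hf N) _
    intro q
    induction q using QuotientGroup.induction_on with
    | H g =>
      rw [← QuotientGroup.mk_mul, QuotientGroup.eq_one_iff, ← hNH']
      exact h0 g
  have hcard : Nat.card (G ⧸ H) = 4 := hidx
  have hk : IsKleinFour (G ⧸ H) := ⟨hcard, by
    apply Nat.Prime.eq_one_or_self_of_dvd Nat.prime_two _ ?_ |>.resolve_left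
    · intro h
      rw [Monoid.exp_eq_one_iff] at h
      have h1 := Nat.card_eq_one_iff_unique.2 ⟨h, ⟨(1 : G ⧸ H)⟩⟩
      omega
    · apply Monoid.exponent_dvd_of_forall_pow_eq_one
      intro g
      rw [pow_two]
      exact hexp g⟩
  obtain ⟨e⟩ := IsKleinFour.nonempty_mulEquiv (G₁ := G ⧸ H)
    (G₂ := Multiplicative (Fin 2 → ZMod 2))
  refine ⟨e.toMonoidHom.comp (QuotientGroup.mk' H), ?_, ?_⟩
  · exact e.surjective.comp (QuotientGroup.mk'_surjective H)
  · ext g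
    simp [MonoidHom.mem_ker]

end helpers

theorem stmt_19 {G : Type*} [Group G] [Group.FG G] (n : ℕ) (hn : 2 ≤ n)
    (hrank : Group.rank G = n) (H : Subgroup G) (hfin : H.index ≠ 0)
    (hidx : H.index ≤ n + 2) :
    (¬ ExceptionalCase n H →
      ∀ g : G, (∃ x : G, g⁻¹ * x ∈ H ∧ IsPrimitive G x) ∧
        (∃ x : G, x * g⁻¹ ∈ H ∧ IsPrimitive G x)) ∧
    (ExceptionalCase n H →
      H = commutator G ⊔ Subgroup.closure {x : G | ∃ g : G, x = g ^ 2}) := by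
  constructor
  · intro hne
    have hF : Finite (G ⧸ H) := Nat.finite_of_card_ne_zero hfin
    have htr : ∀ a b : G ⧸ H, ∃ g : G, g • a = b := fun a b => MulAction.exists_smul_eq G a b
    rcases main_dichotomy hn hrank htr hidx ((1 : G) : G ⧸ H) with h | ⟨h1, rfl, h2⟩
    · have key : ∀ g : G, ∃ x : G, g⁻¹ * x ∈ H ∧ IsPrimitive G x := by
        intro g
        obtain ⟨x, hx, hxg⟩ := h (g : G ⧸ H)
        rw [MulAction.Quotient.smul_coe, smul_eq_mul, mul_one, eq_comm, QuotientGroup.eq] at hxg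
        exact ⟨x, hxg, hx⟩
      intro g
      refine ⟨key g, ?_⟩
      obtain ⟨x, hx, hp⟩ := key g⁻¹
      refine ⟨x⁻¹, ?_, hp.inv'⟩
      have := inv_mem hx
      simpa using this
    · exact absurd (exceptional_of_no_prim hrank H h2 h1) hne
  · rintro ⟨rfl, hnor, φ, hφ, hker⟩
    set N := commutator G ⊔ Subgroup.closure {x : G | ∃ g : G, x = g ^ 2} with hN
    have hcN : commutator G ≤ N := le_sup_left
    have hsqN : ∀ g : G, g * g ∈ N := fun g =>
      (le_sup_right : _ ≤ N) (Subgroup.subset_closure ⟨g, (pow_two g).symm⟩)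
    have hNn : N.Normal := Subgroup.Normal.of_commutator_le G hcN
    have hNH : N ≤ H := by
      rw [← hker]
      apply sup_le
      · exact Abelianization.commutator_subset_ker φ
      · rw [Subgroup.closure_le]
        rintro _ ⟨g, rfl⟩
        rw [SetLike.mem_coe, MonoidHom.mem_ker, map_pow]
        have := Monoid.pow_exponent_eq_one (φ g)
        rwa [IsKleinFour.exponent_two] at this
    have hm : ∀ y : G, (y : G ⧸ N) * (y : G ⧸ N) = 1 := by
      intro y
      rw [← QuotientGroup.mk_mul, QuotientGroup.eq_one_iff]
      exact hsqN y
    obtain ⟨f, hf⟩ := exists_genTuple G hrank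
    obtain ⟨hQf, hQc⟩ := klein_card _ _ (hm (f 0)) (hm (f 1)) (hm (f 0 * f 1)) (quot_gen hf N)
    have hHi : H.index = 4 := by
      rw [← hker, Subgroup.index_ker, MonoidHom.range_eq_top.2 hφ, Subgroup.card_top]
      exact IsKleinFour.card_four
    have hNi : N.index ≤ 4 := hQc
    apply le_antisymm _ hNH
    rw [← Subgroup.relIndex_eq_one]
    have h1 := Subgroup.relIndex_mul_index hNH
    have h2 : N.index ≠ 0 := (Nat.card_pos (α := G ⧸ N)).ne'
    rw [hHi] at h1
    omega
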